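/- Let (μ,K) ∈ ℚ_{>0} × ℕ* with K ∈ μℕ*, let ε > 0, and define Ω := ∩_{ℓ∈K^{−1}ℤ} {z ∈ ℂ* : |z + q^ℓ| ≥ ε|q^ℓ|}. Then there exists C > 0 such that for all z ∈ Ω: |Θ_{q^{1/μ}}(z)| ≥ C · Θ_{|q|^{1/μ}}(|z|). -/

import Mathlib

/-- The Jacobi theta function `Θ_q(z) = ∑_{ℓ ∈ ℤ} q^{-ℓ(ℓ+1)/2} z^ℓ`. -/
noncomputable def theta (q z : ℂ) : ℂ := ∑' ℓ : ℤ, q ^ (-(ℓ * (ℓ + 1) / 2)) * z ^ ℓ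

/-- The real theta function `Θ_Q(x) = ∑_{ℓ ∈ ℤ} Q^{-ℓ(ℓ+1)/2} x^ℓ` for real `Q, x`. -/
noncomputable def thetaR (Q x : ℝ) : ℝ := ∑' ℓ : ℤ, Q ^ (-(ℓ * (ℓ + 1) / 2)) * x ^ ℓ

/-- Rational powers `q^α := exp(α log q)` of a complex number, via the principal logarithm. -/
noncomputable def qpow (q : ℂ) (α : ℚ) : ℂ := Complex.exp ((α : ℂ) * Complex.log q)

/-- Rational (real) powers `b^α` for a real base. -/
noncomputable def qpowR (b : ℝ) (α : ℚ) : ℝ := b ^ (α : ℝ)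

/-!
With `x = q⁻¹`, the Jacobi triple product identity
`Θ_q(z) = (x; x)_∞ ∏_{k ≥ 0} (1 + x ^ (k + 1) z) (1 + x ^ k z⁻¹)` makes the zeros of `Θ_q` visible.
On the annulus `1 ≤ |z| ≤ |q|` the `k`-th factor of either product is within `|x| ^ k` of `1`, so
the factors with `k ≥ 1` contribute an amount bounded above and away from zero, and the two factors
with `k = 0` are bounded below in terms of the distance of `z` from `-q` and `-1`. The general case
reduces to the annulus because `z ↦ q ^ (-n) z` changes `|Θ_q(z)|` and `Θ_{|q|}(|z|)` by the same
factor. Finally, `K ∈ μℕ*` puts the integral powers of `q ^ (1 / μ)` among those of `q ^ (1 / K)`.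
-/

open Filter Topology

variable {𝕜 ι : Type*}

section GaussBinom

variable [Field 𝕜] {x : 𝕜}

/-- The finite `q`-Pochhammer symbol `(x; x)_n`. -/
def qPochhammer (x : 𝕜) (n : ℕ) : 𝕜 := ∏ k ∈ Finset.range n, (1 - x ^ (k + 1))

/-- The reciprocal `1 / (x; x)_n`, set to `0` for `n < 0` so that its recursion holds for all
integers `n`. -/
noncomputable def qPochhammerInv (x : 𝕜) (n : ℤ) : 𝕜 :=
  if 0 ≤ n then (qPochhammer x n.toNat)⁻¹ else 0

/-- The Gaussian binomial coefficient `(x; x)_n / ((x; x)_k (x; x)_{n - k})`, which is `0` for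
`k < 0` and for `n < k`. -/
noncomputable def gaussBinom (x : 𝕜) (n : ℕ) (k : ℤ) : 𝕜 :=
  qPochhammer x n * qPochhammerInv x k * qPochhammerInv x (n - k)

lemma qPochhammer_succ (x : 𝕜) (n : ℕ) :
    qPochhammer x (n + 1) = qPochhammer x n * (1 - x ^ (n + 1)) :=
  Finset.prod_range_succ _ _

lemma one_sub_pow_succ_ne_zero (hx : ¬IsOfFinOrder x) (k : ℕ) : 1 - x ^ (k + 1) ≠ 0 := fun h =>
  hx (isOfFinOrder_iff_pow_eq_one.2 ⟨k + 1, k.succ_pos, (sub_eq_zero.1 h).symm⟩)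

lemma qPochhammerInv_natCast (x : 𝕜) (n : ℕ) : qPochhammerInv x n = (qPochhammer x n)⁻¹ := by
  simp [qPochhammerInv]

lemma qPochhammerInv_of_neg (x : 𝕜) {n : ℤ} (hn : n < 0) : qPochhammerInv x n = 0 :=
  if_neg hn.not_ge

lemma qPochhammerInv_sub_one (hx : ¬IsOfFinOrder x) (n : ℤ) :
    qPochhammerInv x (n - 1) = (1 - x ^ n) * qPochhammerInv x n := by
  rcases lt_trichotomy n 0 with hn | rfl | hn
  · rw [qPochhammerInv_of_neg x hn, qPochhammerInv_of_neg x (by lia), mul_zero]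
  · rw [qPochhammerInv_of_neg x (by lia), zpow_zero, sub_self, zero_mul]
  · obtain ⟨k, rfl⟩ : ∃ k : ℕ, n = (k + 1 : ℕ) := ⟨(n - 1).toNat, by lia⟩
    rw [show ((k + 1 : ℕ) : ℤ) - 1 = (k : ℕ) by lia, qPochhammerInv_natCast,
      qPochhammerInv_natCast, qPochhammer_succ, zpow_natCast, mul_inv, mul_left_comm,
      mul_inv_cancel₀ (one_sub_pow_succ_ne_zero hx k), mul_one]

lemma gaussBinom_zero (x : 𝕜) (k : ℤ) : gaussBinom x 0 k = if k = 0 then 1 else 0 := by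
  rcases lt_trichotomy k 0 with hk | rfl | hk
  · simp [gaussBinom, qPochhammerInv_of_neg x hk, hk.ne]
  · simp [gaussBinom, qPochhammer, qPochhammerInv]
  · simp [gaussBinom, qPochhammerInv_of_neg x (neg_neg_of_pos hk), hk.ne']

lemma gaussBinom_succ (hx0 : x ≠ 0) (hx : ¬IsOfFinOrder x) (n : ℕ) (k : ℤ) :
    gaussBinom x (n + 1) k = gaussBinom x n (k - 1) + x ^ k * gaussBinom x n k := by
  have hpow : x ^ (n + 1) = x ^ k * x ^ ((n : ℤ) + 1 - k) := by
    rw [← zpow_add₀ hx0, add_sub_cancel]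
    exact_mod_cast (zpow_natCast x (n + 1)).symm
  have hlast := qPochhammerInv_sub_one hx ((n : ℤ) + 1 - k)
  rw [show (n : ℤ) + 1 - k - 1 = n - k by ring] at hlast
  simp only [gaussBinom, Nat.cast_succ, qPochhammer_succ, qPochhammerInv_sub_one hx k, hlast, hpow,
    show (n : ℤ) - (k - 1) = n + 1 - k by ring]
  ring

lemma gaussBinom_succ' (hx0 : x ≠ 0) (hx : ¬IsOfFinOrder x) (n : ℕ) (k : ℤ) :
    gaussBinom x (n + 1) k =
      x ^ ((n : ℤ) + 1 - k) * gaussBinom x n (k - 1) + gaussBinom x n k := by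
  have hsymm (m : ℕ) (j : ℤ) : gaussBinom x m j = gaussBinom x m (m - j) := by
    rw [gaussBinom, gaussBinom, sub_sub_cancel, mul_right_comm]
  rw [hsymm, gaussBinom_succ hx0 hx, hsymm n k, hsymm n (k - 1), Nat.cast_succ, add_comm,
    show (n : ℤ) + 1 - k - 1 = n - k by ring, show (n : ℤ) - (k - 1) = n + 1 - k by ring]

end GaussBinom

section ThetaSeries

/-- The general term `x ^ (j (j + 1) / 2) * z ^ j` of the theta series, in terms of the nome
`x = q⁻¹`. -/
def thetaTerm [DivisionRing 𝕜] (x z : 𝕜) (j : ℤ) : 𝕜 := x ^ (j * (j + 1) / 2) * z ^ j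

/-- The theta series `Θ_q(z)` over a normed field, in terms of the nome `x = q⁻¹`. -/
noncomputable def thetaSeries [NormedField 𝕜] (x z : 𝕜) : 𝕜 := ∑' j : ℤ, thetaTerm x z j

lemma theta_eq_thetaSeries (q z : ℂ) : theta q z = thetaSeries q⁻¹ z :=
  tsum_congr fun j => by rw [thetaTerm, inv_zpow']

lemma thetaR_eq_thetaSeries (q z : ℝ) : thetaR q z = thetaSeries q⁻¹ z :=
  tsum_congr fun j => by rw [thetaTerm, inv_zpow']

lemma add_mul_add_add_one_ediv_two (m n : ℤ) :
    (m + n) * (m + n + 1) / 2 = m * (m + 1) / 2 + n * (n + 1) / 2 + m * n := by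
  rw [show (m + n) * (m + n + 1) = m * (m + 1) + n * (n + 1) + m * n * 2 by ring,
    Int.add_mul_ediv_right _ _ two_ne_zero,
    Int.add_ediv_of_dvd_left (Int.even_mul_succ_self m).two_dvd]

section Field

variable [Field 𝕜] {x z : 𝕜}

lemma thetaTerm_ne_zero (hx0 : x ≠ 0) (hz : z ≠ 0) (j : ℤ) : thetaTerm x z j ≠ 0 :=
  mul_ne_zero (zpow_ne_zero _ hx0) (zpow_ne_zero _ hz)

lemma thetaTerm_add (hx0 : x ≠ 0) (hz : z ≠ 0) (n j : ℤ) :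
    thetaTerm x z (j + n) = thetaTerm x z n * thetaTerm x (x ^ n * z) j := by
  simp only [thetaTerm, add_mul_add_add_one_ediv_two, zpow_add₀ hx0, zpow_add₀ hz, mul_zpow,
    mul_comm j n, zpow_mul]
  ring

lemma thetaTerm_add_one (hx0 : x ≠ 0) (hz : z ≠ 0) (j : ℤ) :
    thetaTerm x z (j + 1) = x ^ (j + 1) * z * thetaTerm x z j := by
  rw [add_comm j, thetaTerm_add hx0 hz, zpow_one_add₀ hx0]
  simp only [thetaTerm, zpow_one, Int.reduceAdd, Int.reduceMul, Int.reduceDiv]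
  ring

/-- Reflecting `j ↦ -1 - j` fixes the triangular numbers. -/
lemma thetaTerm_neg_add_one (hz : z ≠ 0) (j : ℤ) :
    thetaTerm x z (-(j + 1)) = z⁻¹ * thetaTerm x z⁻¹ j := by
  rw [thetaTerm, thetaTerm, zpow_neg, zpow_add_one₀ hz, inv_zpow, mul_inv,
    show -(j + 1) * (-(j + 1) + 1) = j * (j + 1) by ring]
  ring

theorem finite_jacobi_triple_product [TopologicalSpace 𝕜] [IsTopologicalRing 𝕜]
    (hx0 : x ≠ 0) (hx : ¬IsOfFinOrder x) (hz : z ≠ 0) (M N : ℕ) :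
    HasSum (fun j : ℤ => gaussBinom x (M + N) (N + j) * thetaTerm x z j)
      ((∏ k ∈ Finset.range M, (1 + x ^ (k + 1) * z)) *
        ∏ k ∈ Finset.range N, (1 + x ^ k * z⁻¹)) := by
  induction M with
  | zero =>
    induction N with
    | zero =>
      convert hasSum_ite_eq (0 : ℤ) (1 : 𝕜) using 2 with j
      · simp only [Nat.cast_zero, zero_add, gaussBinom_zero, ite_mul, zero_mul]
        split_ifs with hj <;> simp [hj, thetaTerm]
      · simp
    | succ N ih =>
      have hshift := ((Equiv.addRight (1 : ℤ)).hasSum_iff.2 ih).mul_left (x ^ N * z⁻¹)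
      convert ih.add hshift using 1
      · funext j
        have hpow : x ^ ((N : ℤ) + (j + 1)) = x ^ N * x ^ (j + 1) := by
          rw [zpow_add₀ hx0, zpow_natCast]
        simp only [Function.comp_apply, Equiv.coe_addRight, thetaTerm_add_one hx0 hz]
        rw [← add_assoc 0 N 1, gaussBinom_succ hx0 hx, Nat.cast_succ,
          show (N : ℤ) + 1 + j - 1 = N + j by ring, show (N : ℤ) + 1 + j = N + (j + 1) by ring,
          hpow]
        field_simp
      · rw [Finset.prod_range_succ]
        ring
  | succ M ih =>
    have hshift := ((Equiv.addRight (1 : ℤ)).hasSum_iff.2 ih).add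
      (ih.mul_left (x ^ (M + 1) * z))
    rw [← (Equiv.addRight (1 : ℤ)).hasSum_iff]
    convert hshift using 1
    · funext j
      have hpow : x ^ (M + 1) = x ^ ((M : ℤ) - j) * x ^ (j + 1) := by
        rw [← zpow_add₀ hx0, ← zpow_natCast]
        congr 1
        push_cast
        ring
      simp only [Function.comp_apply, Equiv.coe_addRight, thetaTerm_add_one hx0 hz]
      rw [add_right_comm, gaussBinom_succ' hx0 hx, hpow,
        show (N : ℤ) + (j + 1) - 1 = N + j by ring,
        show ((M + N : ℕ) : ℤ) + 1 - (N + (j + 1)) = M - j by push_cast; ring]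
      ring
    · rw [Finset.prod_range_succ]
      ring

end Field

section NormedField

variable [NormedField 𝕜] {x z : 𝕜}

lemma not_isOfFinOrder_of_norm_lt_one (hx : ‖x‖ < 1) : ¬IsOfFinOrder x := fun h =>
  hx.ne h.norm_eq_one

lemma norm_thetaTerm (x z : 𝕜) (j : ℤ) : ‖thetaTerm x z j‖ = thetaTerm ‖x‖ ‖z‖ j := by
  simp only [thetaTerm, norm_mul, norm_zpow]

lemma thetaSeries_eq_thetaTerm_mul (hx0 : x ≠ 0) (hz : z ≠ 0) (n : ℤ) :
    thetaSeries x z = thetaTerm x z n * thetaSeries x (x ^ n * z) := by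
  rw [thetaSeries, thetaSeries, ← tsum_mul_left, ← (Equiv.addRight n).tsum_eq]
  exact tsum_congr fun j => thetaTerm_add hx0 hz n j

lemma summable_norm_geometric_mul (hx : ‖x‖ < 1) (z : 𝕜) : Summable fun k : ℕ => ‖x ^ k * z‖ := by
  simpa only [norm_mul, norm_pow] using
    (summable_geometric_of_lt_one (norm_nonneg x) hx).mul_right ‖z‖

lemma summable_norm_pow_succ_mul (hx : ‖x‖ < 1) (z : 𝕜) :
    Summable fun k : ℕ => ‖x ^ (k + 1) * z‖ := by
  simpa only [pow_succ, mul_assoc] using summable_norm_geometric_mul hx (x * z)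

lemma summable_norm_neg_pow_succ (hx : ‖x‖ < 1) : Summable fun k : ℕ => ‖-x ^ (k + 1)‖ := by
  simpa only [norm_neg, mul_one] using summable_norm_pow_succ_mul hx 1

variable [CompleteSpace 𝕜]

lemma summable_thetaTerm_natCast (hx0 : x ≠ 0) (hx : ‖x‖ < 1) (hz : z ≠ 0) :
    Summable fun n : ℕ => thetaTerm x z n := by
  refine summable_of_ratio_test_tendsto_lt_one zero_lt_one
    (Eventually.of_forall fun n => thetaTerm_ne_zero hx0 hz n) ?_
  have hratio : Tendsto (fun n : ℕ => ‖x ^ (n + 1) * z‖) atTop (𝓝 0) :=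
    (summable_norm_pow_succ_mul hx z).tendsto_atTop_zero
  refine hratio.congr fun n => ?_
  rw [Nat.cast_succ, thetaTerm_add_one hx0 hz, norm_mul _ (thetaTerm x z n),
    mul_div_cancel_right₀ _ (norm_ne_zero_iff.2 (thetaTerm_ne_zero hx0 hz n))]
  norm_cast

lemma summable_thetaTerm (hx0 : x ≠ 0) (hx : ‖x‖ < 1) (hz : z ≠ 0) : Summable (thetaTerm x z) := by
  refine .of_nat_of_neg_add_one (summable_thetaTerm_natCast hx0 hx hz) ?_
  simp only [thetaTerm_neg_add_one hz]
  exact (summable_thetaTerm_natCast hx0 hx (inv_ne_zero hz)).mul_left z⁻¹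

/-- The infinite `q`-Pochhammer symbol `(x; x)_∞`. -/
noncomputable def qPochhammerInf (x : 𝕜) : 𝕜 := ∏' k : ℕ, (1 - x ^ (k + 1))

lemma tendsto_qPochhammer (hx : ‖x‖ < 1) :
    Tendsto (qPochhammer x) atTop (𝓝 (qPochhammerInf x)) := by
  have hmul : Multipliable fun k : ℕ => 1 - x ^ (k + 1) := by
    simpa only [sub_eq_add_neg] using
      multipliable_one_add_of_summable (R := 𝕜) (summable_norm_neg_pow_succ hx)
  exact hmul.tendsto_prod_tprod_nat

lemma qPochhammerInf_ne_zero (hx : ‖x‖ < 1) : qPochhammerInf x ≠ 0 := by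
  have hfac := one_sub_pow_succ_ne_zero (not_isOfFinOrder_of_norm_lt_one hx)
  simp only [sub_eq_add_neg] at hfac
  simpa only [qPochhammerInf, sub_eq_add_neg] using
    tprod_one_add_ne_zero_of_summable hfac (summable_norm_neg_pow_succ hx)

lemma tendsto_qPochhammerInv (hx : ‖x‖ < 1) :
    Tendsto (qPochhammerInv x) atTop (𝓝 (qPochhammerInf x)⁻¹) := by
  rw [← Nat.map_cast_int_atTop, tendsto_map'_iff]
  exact ((tendsto_qPochhammer hx).inv₀ (qPochhammerInf_ne_zero hx)).congr fun n =>
    (qPochhammerInv_natCast x n).symm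

lemma tendsto_gaussBinom_central (hx : ‖x‖ < 1) (j : ℤ) :
    Tendsto (fun N : ℕ => gaussBinom x (N + N) (N + j)) atTop (𝓝 (qPochhammerInf x)⁻¹) := by
  have hnum : Tendsto (fun N : ℕ => qPochhammer x (N + N)) atTop (𝓝 (qPochhammerInf x)) :=
    (tendsto_qPochhammer hx).comp (tendsto_atTop_mono (fun n => n.le_add_right n) tendsto_id)
  have hden (i : ℤ) :
      Tendsto (fun N : ℕ => qPochhammerInv x (N + i)) atTop (𝓝 (qPochhammerInf x)⁻¹) :=
    (tendsto_qPochhammerInv hx).comp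
      (tendsto_atTop_add_const_right _ i tendsto_natCast_atTop_atTop)
  have hlim := (hnum.mul (hden j)).mul (hden (-j))
  rw [mul_inv_cancel₀ (qPochhammerInf_ne_zero hx), one_mul] at hlim
  refine hlim.congr fun N => ?_
  rw [gaussBinom, show ((N + N : ℕ) : ℤ) - (N + j) = N + -j by push_cast; ring]

lemma exists_norm_gaussBinom_le (hx : ‖x‖ < 1) : ∃ C, ∀ n k, ‖gaussBinom x n k‖ ≤ C := by
  obtain ⟨A, hA⟩ := (tendsto_qPochhammer hx).norm.bddAbove_range
  obtain ⟨B, hB⟩ := ((tendsto_qPochhammer hx).inv₀ (qPochhammerInf_ne_zero hx)).norm.bddAbove_range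
  have hA' (n : ℕ) : ‖qPochhammer x n‖ ≤ A := hA ⟨n, rfl⟩
  have hA0 : 0 ≤ A := (norm_nonneg _).trans (hA' 0)
  have hB0 : 0 ≤ B := (norm_nonneg _).trans (hB ⟨0, rfl⟩)
  have hB' (n : ℤ) : ‖qPochhammerInv x n‖ ≤ B := by
    rw [qPochhammerInv]
    split_ifs
    · exact hB ⟨_, rfl⟩
    · rwa [norm_zero]
  refine ⟨A * B * B, fun n k => ?_⟩
  rw [gaussBinom, norm_mul, norm_mul]
  gcongr
  exacts [hA' _, hB' _, hB' _]

lemma multipliable_one_add_pow_succ_mul (hx : ‖x‖ < 1) (z : 𝕜) :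
    Multipliable fun k : ℕ => 1 + x ^ (k + 1) * z :=
  multipliable_one_add_of_summable (summable_norm_pow_succ_mul hx z)

lemma multipliable_one_add_pow_mul (hx : ‖x‖ < 1) (z : 𝕜) :
    Multipliable fun k : ℕ => 1 + x ^ k * z :=
  multipliable_one_add_of_summable (summable_norm_geometric_mul hx z)

theorem jacobi_triple_product (hx0 : x ≠ 0) (hx : ‖x‖ < 1) (hz : z ≠ 0) :
    thetaSeries x z =
      qPochhammerInf x * ((∏' k : ℕ, (1 + x ^ (k + 1) * z)) * ∏' k : ℕ, (1 + x ^ k * z⁻¹)) := by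
  obtain ⟨C, hC⟩ := exists_norm_gaussBinom_le hx
  have hsum : Tendsto (fun N : ℕ => ∑' j : ℤ, gaussBinom x (N + N) (N + j) * thetaTerm x z j)
      atTop (𝓝 (∑' j : ℤ, (qPochhammerInf x)⁻¹ * thetaTerm x z j)) := by
    have hbound := summable_thetaTerm (norm_ne_zero_iff.2 hx0) ((norm_norm x).trans_lt hx)
      (norm_ne_zero_iff.2 hz)
    refine tendsto_tsum_of_dominated_convergence (hbound.mul_left C)
      (fun j => (tendsto_gaussBinom_central hx j).mul_const _)
      (Eventually.of_forall fun N j => ?_)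
    rw [norm_mul, ← norm_thetaTerm]
    gcongr
    exact hC _ _
  have hprod : Tendsto (fun N : ℕ => ∑' j : ℤ, gaussBinom x (N + N) (N + j) * thetaTerm x z j)
      atTop (𝓝 ((∏' k : ℕ, (1 + x ^ (k + 1) * z)) * ∏' k : ℕ, (1 + x ^ k * z⁻¹))) := by
    refine ((multipliable_one_add_pow_succ_mul hx z).tendsto_prod_tprod_nat.mul
      (multipliable_one_add_pow_mul hx z⁻¹).tendsto_prod_tprod_nat).congr fun N => ?_
    have hxfin := not_isOfFinOrder_of_norm_lt_one hx
    exact (finite_jacobi_triple_product hx0 hxfin hz N N).tsum_eq.symm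
  rw [← tendsto_nhds_unique hsum hprod, tsum_mul_left,
    mul_inv_cancel_left₀ (qPochhammerInf_ne_zero hx), thetaSeries]

end NormedField

end ThetaSeries

section ProductBounds

lemma tprod_le_tprod_of_nonneg {f g : ι → ℝ} (hf : Multipliable f) (hg : Multipliable g)
    (h0 : ∀ i, 0 ≤ f i) (hfg : ∀ i, f i ≤ g i) : ∏' i, f i ≤ ∏' i, g i :=
  le_of_tendsto_of_tendsto' hf.hasProd hg.hasProd fun _ =>
    Finset.prod_le_prod (fun i _ => h0 i) fun i _ => hfg i

lemma tprod_one_add_pos {f : ι → ℝ} (hf : Summable f) (h0 : ∀ i, 0 < 1 + f i) :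
    0 < ∏' i, (1 + f i) := by
  rw [← Real.rexp_tsum_eq_tprod h0 (Real.summable_log_one_add_of_summable hf)]
  exact Real.exp_pos _

lemma qPochhammerInf_pos {r : ℝ} (hr0 : 0 ≤ r) (hr1 : r < 1) : 0 < qPochhammerInf r := by
  have hs : Summable fun k : ℕ => -r ^ (k + 1) :=
    ((summable_nat_add_iff 1).2 (summable_geometric_of_lt_one hr0 hr1)).neg
  simpa only [qPochhammerInf, sub_eq_add_neg] using
    tprod_one_add_pos hs fun k => by linarith [pow_lt_one₀ hr0 hr1 k.add_one_ne_zero]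

variable [NormedField 𝕜] [CompleteSpace 𝕜] {r : ℝ} {a : ℕ → 𝕜}

lemma norm_tprod_one_add_le (hr1 : r < 1) (ha : ∀ k, ‖a k‖ ≤ r ^ k) :
    ‖∏' k, (1 + a k)‖ ≤ ∏' k : ℕ, (1 + r ^ k) := by
  have hr0 : 0 ≤ r := by simpa only [pow_one] using (norm_nonneg _).trans (ha 1)
  have hr := summable_geometric_of_lt_one hr0 hr1
  have hs : Summable fun k => ‖a k‖ := hr.of_nonneg_of_le (fun k => norm_nonneg _) ha
  rw [(multipliable_one_add_of_summable hs).norm_tprod]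
  refine tprod_le_tprod_of_nonneg (multipliable_norm_one_add_of_summable_norm hs)
    (Real.multipliable_one_add_of_summable hr) (fun k => norm_nonneg _) fun k => ?_
  calc ‖1 + a k‖ ≤ ‖(1 : 𝕜)‖ + ‖a k‖ := norm_add_le _ _
    _ ≤ 1 + r ^ k := by rw [norm_one]; gcongr; exact ha k

lemma mul_qPochhammerInf_le_norm_tprod_one_add {δ : ℝ} (hr1 : r < 1)
    (ha : ∀ k, ‖a k‖ ≤ r ^ k) (ha0 : δ ≤ ‖1 + a 0‖) :
    δ * qPochhammerInf r ≤ ‖∏' k, (1 + a k)‖ := by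
  have hr0 : 0 ≤ r := by simpa only [pow_one] using (norm_nonneg _).trans (ha 1)
  have hr : Summable fun k : ℕ => r ^ (k + 1) :=
    (summable_nat_add_iff 1).2 (summable_geometric_of_lt_one hr0 hr1)
  have hs : Summable fun k => ‖a (k + 1)‖ :=
    hr.of_nonneg_of_le (fun k => norm_nonneg _) fun k => ha (k + 1)
  have hmul := multipliable_one_add_of_summable hs
  have htail : qPochhammerInf r ≤ ‖∏' k, (1 + a (k + 1))‖ := by
    rw [hmul.norm_tprod, qPochhammerInf]
    refine tprod_le_tprod_of_nonneg ?_ (multipliable_norm_one_add_of_summable_norm hs)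
      (fun k => sub_nonneg.2 (pow_le_one₀ hr0 hr1.le)) fun k => ?_
    · simpa only [sub_eq_add_neg] using Real.multipliable_one_add_of_summable hr.neg
    · calc 1 - r ^ (k + 1) ≤ ‖(1 : 𝕜)‖ - ‖a (k + 1)‖ := by rw [norm_one]; gcongr; exact ha _
        _ ≤ ‖1 + a (k + 1)‖ := norm_sub_le_norm_add _ _
  rw [tprod_eq_zero_mul' (f := fun k => 1 + a k) hmul, norm_mul]
  exact mul_le_mul ha0 htail (qPochhammerInf_pos hr0 hr1).le (norm_nonneg _)

end ProductBounds

section LowerBound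

variable [NormedField 𝕜] {x z : 𝕜}

lemma norm_pow_succ_mul_le (hz : ‖z‖ ≤ ‖x‖⁻¹) (k : ℕ) : ‖x ^ (k + 1) * z‖ ≤ ‖x‖ ^ k := by
  have hxz : ‖x‖ * ‖z‖ ≤ 1 :=
    (mul_le_mul_of_nonneg_left hz (norm_nonneg x)).trans mul_inv_le_one
  rw [pow_succ, mul_assoc, norm_mul, norm_mul, norm_pow]
  exact mul_le_of_le_one_right (by positivity) hxz

lemma norm_pow_mul_inv_le (x : 𝕜) (hz : 1 ≤ ‖z‖) (k : ℕ) : ‖x ^ k * z⁻¹‖ ≤ ‖x‖ ^ k := by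
  rw [norm_mul, norm_pow, norm_inv]
  exact mul_le_of_le_one_right (by positivity) (inv_le_one_of_one_le₀ hz)

lemma norm_one_add_inv_zpow_mul_ge {q : 𝕜} (hq0 : q ≠ 0) {ε : ℝ} {n : ℤ}
    (hz : ε * ‖q ^ n‖ ≤ ‖z + q ^ n‖) : ε ≤ ‖1 + q⁻¹ ^ n * z‖ := by
  have hqn : q ^ n ≠ 0 := zpow_ne_zero n hq0
  have hfactor : 1 + q⁻¹ ^ n * z = (z + q ^ n) / q ^ n := by
    rw [inv_zpow]
    field_simp
    ring
  rwa [hfactor, norm_div, le_div_iff₀ (norm_pos_iff.2 hqn)]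

variable [CompleteSpace 𝕜]

lemma norm_thetaSeries_le (hx0 : x ≠ 0) (hx : ‖x‖ < 1) (hz1 : 1 ≤ ‖z‖) (hzx : ‖z‖ ≤ ‖x‖⁻¹) :
    ‖thetaSeries x z‖ ≤ ‖qPochhammerInf x‖ * (∏' k : ℕ, (1 + ‖x‖ ^ k)) ^ 2 := by
  have hz0 : z ≠ 0 := norm_pos_iff.1 (zero_lt_one.trans_le hz1)
  rw [jacobi_triple_product hx0 hx hz0, norm_mul, norm_mul, sq]
  have hright := norm_tprod_one_add_le hx (norm_pow_succ_mul_le hzx)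
  have hleft := norm_tprod_one_add_le hx (norm_pow_mul_inv_le x hz1)
  have hD : 0 ≤ ∏' k : ℕ, (1 + ‖x‖ ^ k) := (norm_nonneg _).trans hright
  gcongr

lemma le_norm_thetaSeries (hx0 : x ≠ 0) (hx : ‖x‖ < 1) (hz1 : 1 ≤ ‖z‖) (hzx : ‖z‖ ≤ ‖x‖⁻¹)
    {ε : ℝ} (hε : 0 ≤ ε) (hxz : ε ≤ ‖1 + x * z‖) (hz : ε ≤ ‖1 + z‖) :
    ‖qPochhammerInf x‖ * ((ε * qPochhammerInf ‖x‖) * (ε * ‖x‖ * qPochhammerInf ‖x‖)) ≤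
      ‖thetaSeries x z‖ := by
  have hz0 : z ≠ 0 := norm_pos_iff.1 (zero_lt_one.trans_le hz1)
  have hinv : ε * ‖x‖ ≤ ‖1 + z⁻¹‖ := by
    rw [show 1 + z⁻¹ = (1 + z) * z⁻¹ by field_simp; ring, norm_mul, norm_inv]
    have hxz' : ‖x‖ ≤ ‖z‖⁻¹ := le_inv_of_le_inv₀ (norm_pos_iff.2 hz0) hzx
    gcongr
  have hP := (qPochhammerInf_pos (norm_nonneg x) hx).le
  rw [jacobi_triple_product hx0 hx hz0, norm_mul, norm_mul]
  gcongr
  · exact mul_qPochhammerInf_le_norm_tprod_one_add hx (norm_pow_succ_mul_le hzx)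
      (by simpa using hxz)
  · exact mul_qPochhammerInf_le_norm_tprod_one_add hx (norm_pow_mul_inv_le x hz1)
      (by simpa using hinv)

lemma exists_mul_thetaSeries_norm_le_of_annulus (hx0 : x ≠ 0) (hx : ‖x‖ < 1) {ε : ℝ} (hε : 0 < ε) :
    ∃ C > 0, ∀ z : 𝕜, 1 ≤ ‖z‖ → ‖z‖ ≤ ‖x‖⁻¹ → ε ≤ ‖1 + x * z‖ → ε ≤ ‖1 + z‖ →
      C * thetaSeries ‖x‖ ‖z‖ ≤ ‖thetaSeries x z‖ := by
  have hr0 : 0 < ‖x‖ := norm_pos_iff.2 hx0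
  have hr1 : ‖(‖x‖)‖ < 1 := (norm_norm x).trans_lt hx
  have hP : 0 < qPochhammerInf ‖x‖ := qPochhammerInf_pos hr0.le hx
  have hPx : 0 < ‖qPochhammerInf x‖ := norm_pos_iff.2 (qPochhammerInf_ne_zero hx)
  have hD : 0 < ∏' k : ℕ, (1 + ‖x‖ ^ k) :=
    tprod_one_add_pos (summable_geometric_of_lt_one hr0.le hx) fun k => by positivity
  set A := ‖qPochhammerInf x‖ * ((ε * qPochhammerInf ‖x‖) * (ε * ‖x‖ * qPochhammerInf ‖x‖))
  set B := qPochhammerInf ‖x‖ * (∏' k : ℕ, (1 + ‖x‖ ^ k)) ^ 2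
  have hB : 0 < B := by positivity
  refine ⟨A / B, by positivity, fun z hz1 hzx hxz hz => ?_⟩
  have hupper : thetaSeries ‖x‖ ‖z‖ ≤ B := by
    have hnorm := norm_thetaSeries_le hr0.ne' hr1 (z := ‖z‖) (by rwa [norm_norm])
      (by rwa [norm_norm, norm_norm])
    rw [norm_norm, Real.norm_of_nonneg hP.le] at hnorm
    exact (Real.le_norm_self _).trans hnorm
  calc A / B * thetaSeries ‖x‖ ‖z‖ ≤ A / B * B := by gcongr
    _ = A := div_mul_cancel₀ A hB.ne'
    _ ≤ ‖thetaSeries x z‖ := le_norm_thetaSeries hx0 hx hz1 hzx hε.le hxz hz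

theorem theta_lower_bound_general {q : 𝕜} (hq : 1 < ‖q‖) {ε : ℝ} (hε : 0 < ε) :
    ∃ C > 0, ∀ z : 𝕜, z ≠ 0 → (∀ n : ℤ, ε * ‖q ^ n‖ ≤ ‖z + q ^ n‖) →
      C * thetaSeries ‖q‖⁻¹ ‖z‖ ≤ ‖thetaSeries q⁻¹ z‖ := by
  have hqpos : 0 < ‖q‖ := zero_lt_one.trans hq
  have hq0 : q ≠ 0 := norm_pos_iff.1 hqpos
  have hinv1 : ‖q⁻¹‖ < 1 := by rw [norm_inv]; exact inv_lt_one_of_one_lt₀ hq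
  obtain ⟨C, hC, hbound⟩ := exists_mul_thetaSeries_norm_le_of_annulus (inv_ne_zero hq0) hinv1 hε
  refine ⟨C, hC, fun z hz hΩ => ?_⟩
  have hΩ' (n : ℤ) : ε ≤ ‖1 + q⁻¹ ^ n * z‖ := norm_one_add_inv_zpow_mul_ge hq0 (hΩ n)
  obtain ⟨n, hn1, hn2⟩ := exists_mem_Ico_zpow (norm_pos_iff.2 hz) hq
  set w := q⁻¹ ^ n * z
  have hw : ‖w‖ = ‖z‖ / ‖q‖ ^ n := by
    rw [norm_mul, norm_zpow, norm_inv, inv_zpow, div_eq_inv_mul]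
  have hw1 : 1 ≤ ‖w‖ := by rwa [hw, one_le_div₀ (by positivity)]
  have hwq : ‖w‖ ≤ ‖q⁻¹‖⁻¹ := by
    rw [hw, norm_inv, inv_inv, div_le_iff₀ (by positivity), ← zpow_one_add₀ hqpos.ne', add_comm]
    exact hn2.le
  have hqw : ε ≤ ‖1 + q⁻¹ * w‖ := by
    rw [← mul_assoc, ← zpow_one_add₀ (inv_ne_zero hq0)]
    exact hΩ' (1 + n)
  set t := thetaTerm ‖q⁻¹‖ ‖z‖ n
  have ht : 0 ≤ t := (norm_nonneg _).trans_eq (norm_thetaTerm q⁻¹ z n)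
  calc C * thetaSeries ‖q‖⁻¹ ‖z‖ = t * (C * thetaSeries ‖q⁻¹‖ ‖w‖) := by
        rw [← norm_inv, thetaSeries_eq_thetaTerm_mul (norm_ne_zero_iff.2 (inv_ne_zero hq0))
          (norm_ne_zero_iff.2 hz) n, norm_mul, norm_zpow, mul_left_comm]
    _ ≤ t * ‖thetaSeries q⁻¹ w‖ :=
        mul_le_mul_of_nonneg_left (hbound w hw1 hwq hqw (hΩ' n)) ht
    _ = ‖thetaSeries q⁻¹ z‖ := by
        rw [thetaSeries_eq_thetaTerm_mul (inv_ne_zero hq0) hz n, norm_mul, norm_thetaTerm]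

end LowerBound

section RationalPowers

variable {q : ℂ}

lemma norm_qpow (hq0 : q ≠ 0) (α : ℚ) : ‖qpow q α‖ = qpowR ‖q‖ α := by
  rw [qpow, qpowR, Complex.norm_exp, Real.rpow_def_of_pos (norm_pos_iff.2 hq0), mul_comm,
    ← Complex.ofReal_ratCast, Complex.re_mul_ofReal, Complex.log_re]

lemma one_lt_norm_qpow (hq : 1 < ‖q‖) {α : ℚ} (hα : 0 < α) : 1 < ‖qpow q α‖ := by
  rw [norm_qpow (norm_pos_iff.1 (zero_lt_one.trans hq)), qpowR]
  exact Real.one_lt_rpow hq (Rat.cast_pos.2 hα)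

lemma qpow_zpow (q : ℂ) (α : ℚ) (n : ℤ) : qpow q α ^ n = qpow q (n * α) := by
  rw [qpow, qpow, ← Complex.exp_int_mul, ← mul_assoc]
  norm_cast

lemma qpow_one_div_zpow (q : ℂ) {μ : ℚ} {K m : ℕ} (hm : 0 < m) (hKm : (K : ℚ) = μ * m) (n : ℤ) :
    qpow q (1 / μ) ^ n = qpow q ((n * m : ℤ) / K) := by
  rw [qpow_zpow, hKm, mul_one_div, Int.cast_mul, Int.cast_natCast,
    mul_div_mul_right _ _ (Nat.cast_ne_zero.2 hm.ne')]

end RationalPowers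

/-- for `(μ,K) ∈ ℚ_{>0} × ℕ*` with `K ∈ μℕ*` and `ε > 0`, on the domain
`Ω = ∩_{ℓ∈K⁻¹ℤ} {z ∈ ℂ* : |z + q^ℓ| ≥ ε|q^ℓ|}` one has
`|Θ_{q^{1/μ}}(z)| ≥ C · Θ_{|q|^{1/μ}}(|z|)` for some constant `C > 0`. -/
theorem theta_lower_bound (q : ℂ) (hq : 1 < ‖q‖) (μ : ℚ) (hμ : 0 < μ) (K : ℕ) (hK : 0 < K)
    (hKμ : ∃ m : ℕ, 0 < m ∧ (K : ℚ) = μ * m) (ε : ℝ) (hε : 0 < ε) :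
    ∃ C > 0, ∀ z : ℂ, z ≠ 0 →
      (∀ j : ℤ, ε * ‖qpow q ((j : ℚ) / K)‖ ≤ ‖z + qpow q ((j : ℚ) / K)‖) →
      C * thetaR (qpowR ‖q‖ (1 / μ)) ‖z‖ ≤ ‖theta (qpow q (1 / μ)) z‖ := by
  obtain ⟨m, hm, hKm⟩ := hKμ
  obtain ⟨C, hC, hbound⟩ := theta_lower_bound_general (one_lt_norm_qpow hq (one_div_pos.2 hμ)) hε
  refine ⟨C, hC, fun z hz hΩ => ?_⟩
  rw [theta_eq_thetaSeries, thetaR_eq_thetaSeries,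
    ← norm_qpow (norm_pos_iff.1 (zero_lt_one.trans hq))]
  exact hbound z hz fun n => qpow_one_div_zpow q hm hKm n ▸ hΩ (n * m)
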